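/- arXiv:1204.0994 — 3 statements merged into one kernel-verified Lean document; each statement's English description precedes it below -/
import Mathlib

section
/- For every integer k ≥ 5, the cubic p_k has exactly three real roots, one in the open interval (0, 1/2), one in (1/2, 1), and one in (k, k+1); in particular all complex roots of p_k are real and pairwise distinct. -/
/-- The polynomial `p_k(x) = x^3 - (k+1)x^2 + kx - 1`. -/
noncomputable def p (k : ℤ) (x : ℝ) : ℝ := x ^ 3 - (k + 1) * x ^ 2 + k * x - 1

/-- For every integer `k ≥ 5` the cubic `p_k` has exactly three real roots: one in
`(0, 1/2)`, one in `(1/2, 1)` and one in `(k, k+1)`; moreover all complex roots of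
`p_k` are real (and these three roots are pairwise distinct). -/
theorem p_three_real_roots (k : ℤ) (hk : 5 ≤ k) :
    ∃ a b c : ℝ,
      a ∈ Set.Ioo (0 : ℝ) (1 / 2) ∧
      b ∈ Set.Ioo (1 / 2 : ℝ) 1 ∧
      c ∈ Set.Ioo (k : ℝ) ((k : ℝ) + 1) ∧
      a ≠ b ∧ a ≠ c ∧ b ≠ c ∧
      {x : ℝ | p k x = 0} = {a, b, c} ∧
      ∀ z : ℂ, z ^ 3 - ((k : ℂ) + 1) * z ^ 2 + (k : ℂ) * z - 1 = 0 → z.im = 0 := by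
  have hk' : (5 : ℝ) ≤ (k : ℝ) := by exact_mod_cast hk
  have hcont : Continuous (p k) := by
    unfold p
    fun_prop
  have h0 : p k 0 < 0 := by
    unfold p
    norm_num
  have hh : 0 < p k (1 / 2) := by
    unfold p
    linarith
  have h1 : p k 1 < 0 := by
    unfold p
    linarith
  have h2 : p k (k : ℝ) < 0 := by
    unfold p
    linarith
  have h3 : 0 < p k ((k : ℝ) + 1) := by
    unfold p
    nlinarith
  obtain ⟨a, ha, pa⟩ := intermediate_value_Ioo (by norm_num : (0 : ℝ) ≤ 1 / 2)
    hcont.continuousOn ⟨h0, hh⟩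
  obtain ⟨b, hb, pb⟩ := intermediate_value_Ioo' (by norm_num : (1 / 2 : ℝ) ≤ 1)
    hcont.continuousOn ⟨h1, hh⟩
  obtain ⟨c, hc, pc⟩ := intermediate_value_Ioo (by linarith : (k : ℝ) ≤ (k : ℝ) + 1)
    hcont.continuousOn ⟨h2, h3⟩
  have hab : a ≠ b := (ha.2.trans hb.1).ne
  have hbc : b ≠ c := by
    have := hb.2
    have := hc.1
    intro h
    linarith
  have hac : a ≠ c := by
    have := ha.2
    have := hc.1
    intro h
    linarith
  unfold p at pa pb pc
  have q1 : a ^ 2 + a * b + b ^ 2 - (k + 1) * (a + b) + k = 0 := by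
    apply mul_left_cancel₀ (sub_ne_zero.mpr hab)
    linear_combination pa - pb
  have q2 : a ^ 2 + a * c + c ^ 2 - (k + 1) * (a + c) + k = 0 := by
    apply mul_left_cancel₀ (sub_ne_zero.mpr hac)
    linear_combination pa - pc
  have v1 : a + b + c = k + 1 := by
    apply mul_left_cancel₀ (sub_ne_zero.mpr hbc)
    linear_combination q1 - q2
  have v2 : a * b + a * c + b * c = k := by
    linear_combination (a + b) * v1 - q1
  have v3 : a * b * c = 1 := by
    linear_combination pa - a ^ 2 * v1 + a * v2
  refine ⟨a, b, c, ha, hb, hc, hab, hac, hbc, ?_, ?_⟩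
  · ext x
    have hx : p k x = (x - a) * ((x - b) * (x - c)) := by
      unfold p
      linear_combination x ^ 2 * v1 - x * v2 + v3
    simp only [Set.mem_setOf_eq, hx, mul_eq_zero, sub_eq_zero, Set.mem_insert_iff,
      Set.mem_singleton_iff]
  · intro z hz
    have w1 : (a : ℂ) + b + c = k + 1 := by exact_mod_cast congrArg Complex.ofReal v1
    have w2 : (a : ℂ) * b + a * c + b * c = k := by exact_mod_cast congrArg Complex.ofReal v2
    have w3 : (a : ℂ) * b * c = 1 := by exact_mod_cast congrArg Complex.ofReal v3
    have hz' : (z - a) * ((z - b) * (z - c)) = 0 := by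
      linear_combination hz - z ^ 2 * w1 + z * w2 - w3
    simp only [mul_eq_zero, sub_eq_zero] at hz'
    rcases hz' with h | h | h <;> simp [h]
end

section
/- For every integer k ≥ 5, the matrix A_k has three distinct real eigenvalues λ^s_k < λ^c_k < λ^u_k satisfying 0 < λ^s_k < 1/2 < λ^c_k < 1 < k < λ^u_k < k+1, their product equals 1, and hence λ^s_k = 1/(λ^c_k · λ^u_k). -/
/-- The matrix `A_k` with rows `(0,0,1)`, `(0,1,-1)`, `(-1,-1,k)`. -/
def A (k : ℤ) : Matrix (Fin 3) (Fin 3) ℤ := !![0, 0, 1; 0, 1, -1; -1, -1, k]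

/-- `μ` is a (real) eigenvalue of the real matrix induced by `A_k`. -/
def IsEigenvalueOfA (k : ℤ) (μ : ℝ) : Prop :=
  ∃ v : Fin 3 → ℝ, v ≠ 0 ∧ ((A k).map (Int.cast : ℤ → ℝ)).mulVec v = μ • v

theorem isEigenvalueOfA_iff (k : ℤ) (μ : ℝ) :
    IsEigenvalueOfA k μ ↔ μ ^ 3 - ((k : ℝ) + 1) * μ ^ 2 + k * μ - 1 = 0 := by
  constructor
  · rintro ⟨v, hv, h⟩
    have h0 := congrFun h 0
    have h1 := congrFun h 1
    have h2 := congrFun h 2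
    simp [A, Matrix.mulVec, dotProduct, Fin.sum_univ_three] at h0 h1 h2
    by_contra hp
    apply hv
    have e0 : v 0 = 0 := by
      apply (mul_eq_zero.mp _).resolve_left hp
      rw [h0] at h1 h2
      linear_combination (1 - μ) * h2 + h1
    have e2 : v 2 = 0 := by rw [h0, e0, mul_zero]
    have e1 : v 1 = 0 := by
      rw [e0, e2] at h2
      linarith
    funext i
    fin_cases i <;> simp [e0, e1, e2]
  · intro h
    refine ⟨![1 - μ, μ, μ * (1 - μ)], ?_, ?_⟩
    · intro h'
      have h0 := congrFun h' 0
      have h1 := congrFun h' 1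
      simp at h0 h1
      linarith
    · funext i
      fin_cases i <;> simp [A, Matrix.mulVec, dotProduct, Fin.sum_univ_three]
      · ring
      · linear_combination h

/-- For every `k ≥ 5`, `A_k` has three distinct real eigenvalues
`λ^s_k < λ^c_k < λ^u_k` with `0 < λ^s_k < 1/2 < λ^c_k < 1 < k < λ^u_k < k+1`,
product equal to `1`, and hence `λ^s_k = 1/(λ^c_k · λ^u_k)`; moreover every real
eigenvalue of `A_k` is one of these three. -/
theorem eigenvalues_of_A (k : ℤ) (hk : 5 ≤ k) :
    ∃ s c u : ℝ,
      IsEigenvalueOfA k s ∧ IsEigenvalueOfA k c ∧ IsEigenvalueOfA k u ∧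
      s < c ∧ c < u ∧
      0 < s ∧ s < 1 / 2 ∧ 1 / 2 < c ∧ c < 1 ∧ 1 < (k : ℝ) ∧
      (k : ℝ) < u ∧ u < (k : ℝ) + 1 ∧
      s * c * u = 1 ∧ s = 1 / (c * u) ∧
      ∀ μ : ℝ, IsEigenvalueOfA k μ → μ = s ∨ μ = c ∨ μ = u := by
  have hk' : (5 : ℝ) ≤ k := by exact_mod_cast hk
  simp only [isEigenvalueOfA_iff]
  have hc : Continuous (fun x : ℝ => x ^ 3 - ((k : ℝ) + 1) * x ^ 2 + k * x - 1) := by fun_prop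
  obtain ⟨s, ⟨hs0, hs1⟩, hs⟩ := intermediate_value_Ioo (a := (0 : ℝ)) (b := 1 / 2) (by norm_num)
    hc.continuousOn (show (0 : ℝ) ∈ _ from ⟨by norm_num, by norm_num; linarith⟩)
  obtain ⟨c, ⟨hc0, hc1⟩, hcc⟩ := intermediate_value_Ioo' (a := (1 / 2 : ℝ)) (b := 1) (by norm_num)
    hc.continuousOn (show (0 : ℝ) ∈ _ from ⟨by norm_num, by norm_num; linarith⟩)
  obtain ⟨u, ⟨hu0, hu1⟩, hu⟩ := intermediate_value_Ioo (a := (k : ℝ)) (b := k + 1) (by linarith)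
    hc.continuousOn (show (0 : ℝ) ∈ _ from ⟨by ring_nf; norm_num, by ring_nf; nlinarith⟩)
  simp only at hs hcc hu
  have h1 : s ^ 2 + s * c + c ^ 2 - ((k : ℝ) + 1) * (s + c) + k = 0 := by
    apply (mul_eq_zero.mp _).resolve_left (show s - c ≠ 0 by intro h; linarith)
    linear_combination hs - hcc
  have h2 : u ^ 2 + u * c + c ^ 2 - ((k : ℝ) + 1) * (u + c) + k = 0 := by
    apply (mul_eq_zero.mp _).resolve_left (show u - c ≠ 0 by intro h; linarith)
    linear_combination hu - hcc
  have h3 : s + c + u - ((k : ℝ) + 1) = 0 := by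
    apply (mul_eq_zero.mp _).resolve_left (show s - u ≠ 0 by intro h; linarith)
    linear_combination h1 - h2
  have h4 : s * c + s * u + c * u = k := by
    linear_combination (s + c) * h3 - h1
  have h5 : s * c * u = 1 := by
    linear_combination hs - s ^ 2 * h3 + s * h4
  refine ⟨s, c, u, hs, hcc, hu, by linarith, by linarith, hs0, hs1, hc0, hc1, by linarith,
    hu0, hu1, h5, ?_, ?_⟩
  · have : c * u ≠ 0 := by
      apply ne_of_gt
      apply mul_pos <;> linarith
    rw [eq_div_iff this]
    linarith
  · intro μ hμ
    have : (μ - s) * ((μ - c) * (μ - u)) = 0 := by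
      linear_combination hμ - μ ^ 2 * h3 + μ * h4 - h5
    rcases mul_eq_zero.mp this with h | h
    · left; linarith
    rcases mul_eq_zero.mp h with h | h
    · right; left; linarith
    · right; right; linarith
end

section
/- Let V be a real inner product space, let E and F be subspaces of V with V the orthogonal direct sum of E and F, and let T : V → V be a linear map with T(E) ⊆ E and T(F) ⊆ F. Let β > 0 and λ₂ ≥ 0, and suppose there is a constant c ≥ (1+β)·λ₂ such that ‖T w‖ ≥ c‖w‖ for all w ∈ F. Then for every v in the cone C(F, β) = { u + w : u ∈ E, w ∈ F, ‖u‖ ≤ β‖w‖ } one has ‖T v‖ ≥ λ₂‖v‖. -/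
open RealInnerProductSpace

variable {V : Type*} [NormedAddCommGroup V] [InnerProductSpace ℝ V]

/-- The cone centered at the subspace `F` (with complementary subspace `E`)
with angle `β`: vectors `v = u + w`, `u ∈ E`, `w ∈ F`, with `‖u‖ ≤ β‖w‖`. -/
def cone (E F : Submodule ℝ V) (β : ℝ) : Set V :=
  {v | ∃ u ∈ E, ∃ w ∈ F, v = u + w ∧ ‖u‖ ≤ β * ‖w‖}

/-- Let `V = E ⊕ F` be an orthogonal direct sum and `T` a linear map preserving
`E` and `F`. If `T` expands `F` by at least `c ≥ (1+β)·λ₂`, then `T` expands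
every vector of the cone `C(F, β)` by at least `λ₂`. -/
theorem expansion_on_cone (E F : Submodule ℝ V)
    (horth : ∀ u ∈ E, ∀ w ∈ F, ⟪u, w⟫ = 0) (hcompl : IsCompl E F)
    (T : V →ₗ[ℝ] V) (hTE : ∀ u ∈ E, T u ∈ E) (hTF : ∀ w ∈ F, T w ∈ F)
    (β lam2 c : ℝ) (hβ : 0 < β) (hlam2 : 0 ≤ lam2)
    (hc : (1 + β) * lam2 ≤ c) (hF : ∀ w ∈ F, c * ‖w‖ ≤ ‖T w‖) :
    ∀ v ∈ cone E F β, lam2 * ‖v‖ ≤ ‖T v‖ := by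
  rintro v ⟨u, hu, w, hw, rfl, huw⟩
  have h0 := norm_add_sq_eq_norm_sq_add_norm_sq_of_inner_eq_zero (T u) (T w)
    (horth _ (hTE u hu) _ (hTF w hw))
  have h1 : ‖T w‖ ≤ ‖T (u + w)‖ := by
    rw [map_add]
    apply le_of_not_gt; intro hlt
    nlinarith [mul_self_nonneg ‖T u‖, norm_nonneg (T u + T w), norm_nonneg (T w)]
  calc lam2 * ‖u + w‖ ≤ lam2 * ((1 + β) * ‖w‖) := by
        refine mul_le_mul_of_nonneg_left ?_ hlam2
        linarith [norm_add_le u w]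
    _ = (1 + β) * lam2 * ‖w‖ := by ring
    _ ≤ c * ‖w‖ := mul_le_mul_of_nonneg_right hc (norm_nonneg _)
    _ ≤ ‖T w‖ := hF w hw
    _ ≤ _ := h1
end
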